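/- Let φ(x) be a formula of the correspondence language with at most the free variable x. Then φ(x) is logically equivalent to the (2,2)-standard x-translation ST_22(I,x) of some modal intuitionistic formula I if and only if φ(x) is invariant with respect to (2,2)-modal asimulations. -/

import Mathlib

namespace ModalIntAsim

/-- Binary relation symbols of the correspondence vocabulary: R, R_□, R_◇. -/
inductive RelSym : Type
  | r | box | diam
deriving DecidableEq

/-- Formulas of the correspondence language: classical first-order logic without
identity, with variables indexed by `ℕ`, unary predicate letters `P n` (n : ℕ),
and the three binary relation symbols. -/
inductive FOForm : Type
  | falsum : FOForm
  | pred : ℕ → ℕ → FOForm            -- `pred n v` is `P_n(x_v)`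
  | rel : RelSym → ℕ → ℕ → FOForm    -- `rel s v w` is `S(x_v, x_w)`
  | conj : FOForm → FOForm → FOForm
  | disj : FOForm → FOForm → FOForm
  | impl : FOForm → FOForm → FOForm
  | all : ℕ → FOForm → FOForm
  | ex : ℕ → FOForm → FOForm

namespace FOForm

/-- Free variables of a correspondence formula. -/
def freeVars : FOForm → Finset ℕ
  | falsum => ∅
  | pred _ v => {v}
  | rel _ v w => {v, w}
  | conj f g => f.freeVars ∪ g.freeVars
  | disj f g => f.freeVars ∪ g.freeVars
  | impl f g => f.freeVars ∪ g.freeVars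
  | all v f => f.freeVars \ {v}
  | ex v f => f.freeVars \ {v}

/-- The unary predicate letters occurring in a formula (the binary relation
symbols R, R_□, R_◇ are regarded as belonging to every vocabulary Σ_φ). -/
def predLetters : FOForm → Finset ℕ
  | falsum => ∅
  | pred n _ => {n}
  | rel _ _ _ => ∅
  | conj f g => f.predLetters ∪ g.predLetters
  | disj f g => f.predLetters ∪ g.predLetters
  | impl f g => f.predLetters ∪ g.predLetters
  | all _ f => f.predLetters
  | ex _ f => f.predLetters

/-- Degree of a formula: the greatest number of nested quantifiers. -/
def degree : FOForm → ℕ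
  | falsum => 0
  | pred _ _ => 0
  | rel _ _ _ => 0
  | conj f g => max f.degree g.degree
  | disj f g => max f.degree g.degree
  | impl f g => max f.degree g.degree
  | all _ f => f.degree + 1
  | ex _ f => f.degree + 1

end FOForm

/-- A model of the correspondence language: a domain together with
interpretations of R, R_□, R_◇ and of the unary predicate letters.
(A Θ-model only consults the letters in Θ.) -/
structure Model : Type 1 where
  U : Type
  rel : U → U → Prop
  relBox : U → U → Prop
  relDiam : U → U → Prop
  pred : ℕ → U → Prop

/-- Interpretation of a binary relation symbol in a model. -/
def Model.relOf (M : Model) : RelSym → M.U → M.U → Prop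
  | .r => M.rel
  | .box => M.relBox
  | .diam => M.relDiam

/-- Tarskian satisfaction of a formula in a model under an assignment. -/
def Sat (M : Model) : FOForm → (ℕ → M.U) → Prop
  | .falsum, _ => False
  | .pred n v, α => M.pred n (α v)
  | .rel s v w, α => M.relOf s (α v) (α w)
  | .conj f g, α => Sat M f α ∧ Sat M g α
  | .disj f g, α => Sat M f α ∨ Sat M g α
  | .impl f g, α => Sat M f α → Sat M g α
  | .all v f, α => ∀ u : M.U, Sat M f (Function.update α v u)
  | .ex v f, α => ∃ u : M.U, Sat M f (Function.update α v u)

/-- `M, a ⊨ φ(x)`: φ is true in `M` under any assignment sending `x` to `a`. -/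
def SatAt (M : Model) (a : M.U) (x : ℕ) (φ : FOForm) : Prop :=
  ∀ α : ℕ → M.U, α x = a → Sat M φ α

/-- Logical equivalence of correspondence formulas. -/
def Equiv (φ ψ : FOForm) : Prop :=
  ∀ (M : Model) (α : ℕ → M.U), Sat M φ α ↔ Sat M ψ α

/-- Logical entailment between correspondence formulas. -/
def Entails (φ ψ : FOForm) : Prop :=
  ∀ (M : Model) (α : ℕ → M.U), Sat M φ α → Sat M ψ α

/-- Modal intuitionistic formulas: built from propositional letters `p n`
using ⊥, ∧, ∨, →, □, ◇. -/
inductive MForm : Type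
  | bot : MForm
  | prop : ℕ → MForm
  | conj : MForm → MForm → MForm
  | disj : MForm → MForm → MForm
  | impl : MForm → MForm → MForm
  | box : MForm → MForm
  | diam : MForm → MForm

/-- The (i,j)-standard x-translation `ST_ij`.  `boxOne = true` means the box
clause (□₁) is used (i = 1), `boxOne = false` means (□₂) (i = 2); likewise
`diamOne = true` means the diamond clause (◇₁) (j = 1) and `diamOne = false`
means (◇₂) (j = 2).  Bound variables are chosen fresh as `x+1`, `x+2`. -/
def ST (boxOne diamOne : Bool) : MForm → ℕ → FOForm
  | .bot, _ => .falsum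
  | .prop n, x => .pred n x
  | .conj I J, x => .conj (ST boxOne diamOne I x) (ST boxOne diamOne J x)
  | .disj I J, x => .disj (ST boxOne diamOne I x) (ST boxOne diamOne J x)
  | .impl I J, x =>
      .all (x + 1) (.impl (.rel .r x (x + 1))
        (.impl (ST boxOne diamOne I (x + 1)) (ST boxOne diamOne J (x + 1))))
  | .box I, x =>
      if boxOne then
        .all (x + 1) (.impl (.rel .box x (x + 1)) (ST boxOne diamOne I (x + 1)))
      else
        .all (x + 1) (.impl (.rel .r x (x + 1))
          (.all (x + 2) (.impl (.rel .box (x + 1) (x + 2)) (ST boxOne diamOne I (x + 2)))))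
  | .diam I, x =>
      if diamOne then
        .ex (x + 1) (.conj (.rel .diam x (x + 1)) (ST boxOne diamOne I (x + 1)))
      else
        .all (x + 1) (.impl (.rel .r x (x + 1))
          (.ex (x + 2) (.conj (.rel .diam (x + 1) (x + 2)) (ST boxOne diamOne I (x + 2)))))

/-! ### Conditions on relations between tuples (the k-asimulation conditions).
A relation between the two models is represented by its two directed
components; `N` is the model of the source tuple and `P` that of the target
tuple.  A tuple `(ā_m, a)` is represented as the list `as ++ [a]`, with
`m = as.length`. -/

section TupleConds

variable (N P : Model)

/-- The "p-type" condition: related tuples are nonempty and of equal length. -/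
def TypeCond (A : List N.U → List P.U → Prop) : Prop :=
  ∀ as bs, A as bs → as ≠ [] ∧ as.length = bs.length

/-- (p-base). -/
def BaseCond (Θ : Set ℕ) (A : List N.U → List P.U → Prop) : Prop :=
  ∀ (as : List N.U) (bs : List P.U) (a : N.U) (b : P.U),
    A (as ++ [a]) (bs ++ [b]) → ∀ n ∈ Θ, N.pred n a → P.pred n b

/-- (p-step). -/
def StepCond (k : ℕ) (A : List N.U → List P.U → Prop)
    (Arev : List P.U → List N.U → Prop) : Prop :=
  ∀ (as : List N.U) (bs : List P.U) (a : N.U) (b d : P.U),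
    A (as ++ [a]) (bs ++ [b]) → P.rel b d → as.length < k →
    ∃ c : N.U, N.rel a c ∧ A (as ++ [a, c]) (bs ++ [b, d]) ∧
      Arev (bs ++ [b, d]) (as ++ [a, c])

/-- (p-box-1). -/
def Box1Cond (k : ℕ) (A : List N.U → List P.U → Prop) : Prop :=
  ∀ (as : List N.U) (bs : List P.U) (a : N.U) (b d : P.U),
    A (as ++ [a]) (bs ++ [b]) → P.relBox b d → as.length < k →
    ∃ c : N.U, N.relBox a c ∧ A (as ++ [a, c]) (bs ++ [b, d])

/-- (p-box-2). -/
def Box2Cond (k : ℕ) (A : List N.U → List P.U → Prop) : Prop :=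
  ∀ (as : List N.U) (bs : List P.U) (a : N.U) (b d f : P.U),
    A (as ++ [a]) (bs ++ [b]) → P.rel b d → P.relBox d f → as.length + 1 < k →
    ∃ c e : N.U, N.rel a c ∧ N.relBox c e ∧ A (as ++ [a, c, e]) (bs ++ [b, d, f])

/-- (p-diam-1). -/
def Diam1Cond (k : ℕ) (A : List N.U → List P.U → Prop) : Prop :=
  ∀ (as : List N.U) (bs : List P.U) (a c : N.U) (b : P.U),
    A (as ++ [a]) (bs ++ [b]) → N.relDiam a c → as.length < k →
    ∃ d : P.U, P.relDiam b d ∧ A (as ++ [a, c]) (bs ++ [b, d])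

/-- (p-diam-2(1)). -/
def Diam2aCond (k : ℕ) (A B : List N.U → List P.U → Prop) : Prop :=
  ∀ (as : List N.U) (bs : List P.U) (a : N.U) (b d : P.U),
    A (as ++ [a]) (bs ++ [b]) → P.rel b d → as.length + 1 < k →
    ∃ c : N.U, N.rel a c ∧ B (as ++ [a, c]) (bs ++ [b, d])

/-- (p-diam-2(2)). -/
def Diam2bCond (k : ℕ) (B A : List N.U → List P.U → Prop) : Prop :=
  ∀ (as : List N.U) (bs : List P.U) (a c : N.U) (b : P.U),
    B (as ++ [a]) (bs ++ [b]) → N.relDiam a c → as.length < k →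
    ∃ d : P.U, P.relDiam b d ∧ A (as ++ [a, c]) (bs ++ [b, d])

end TupleConds

/-- An (i,1)-modal ⟨(M₁,t),(M₂,u)⟩_k-asimulation (j = 1): a single relation `A`
given by its two directed components `A12`, `A21`. -/
def IsKAsimD1 (boxOne : Bool) (Θ : Set ℕ) (M₁ M₂ : Model) (t : M₁.U) (u : M₂.U) (k : ℕ)
    (A12 : List M₁.U → List M₂.U → Prop) (A21 : List M₂.U → List M₁.U → Prop) : Prop :=
  TypeCond M₁ M₂ A12 ∧ TypeCond M₂ M₁ A21 ∧
  A12 [t] [u] ∧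
  BaseCond M₁ M₂ Θ A12 ∧ BaseCond M₂ M₁ Θ A21 ∧
  StepCond M₁ M₂ k A12 A21 ∧ StepCond M₂ M₁ k A21 A12 ∧
  (if boxOne then Box1Cond M₁ M₂ k A12 ∧ Box1Cond M₂ M₁ k A21
   else Box2Cond M₁ M₂ k A12 ∧ Box2Cond M₂ M₁ k A21) ∧
  Diam1Cond M₁ M₂ k A12 ∧ Diam1Cond M₂ M₁ k A21

/-- An (i,2)-modal ⟨(M₁,t),(M₂,u)⟩_k-asimulation (j = 2): an ordered pair
(A, B) of relations, each given by its two directed components. -/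
def IsKAsimD2 (boxOne : Bool) (Θ : Set ℕ) (M₁ M₂ : Model) (t : M₁.U) (u : M₂.U) (k : ℕ)
    (A12 : List M₁.U → List M₂.U → Prop) (A21 : List M₂.U → List M₁.U → Prop)
    (B12 : List M₁.U → List M₂.U → Prop) (B21 : List M₂.U → List M₁.U → Prop) : Prop :=
  TypeCond M₁ M₂ A12 ∧ TypeCond M₂ M₁ A21 ∧
  TypeCond M₁ M₂ B12 ∧ TypeCond M₂ M₁ B21 ∧
  A12 [t] [u] ∧
  BaseCond M₁ M₂ Θ A12 ∧ BaseCond M₂ M₁ Θ A21 ∧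
  StepCond M₁ M₂ k A12 A21 ∧ StepCond M₂ M₁ k A21 A12 ∧
  (if boxOne then Box1Cond M₁ M₂ k A12 ∧ Box1Cond M₂ M₁ k A21
   else Box2Cond M₁ M₂ k A12 ∧ Box2Cond M₂ M₁ k A21) ∧
  Diam2aCond M₁ M₂ k A12 B12 ∧ Diam2aCond M₂ M₁ k A21 B21 ∧
  Diam2bCond M₁ M₂ k B12 A12 ∧ Diam2bCond M₂ M₁ k B21 A21

/-- φ(x) is invariant with respect to (i,1)-modal k-asimulations. -/
def KInvariantD1 (boxOne : Bool) (x : ℕ) (φ : FOForm) (k : ℕ) : Prop :=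
  ∀ Θ : Set ℕ, (φ.predLetters : Set ℕ) ⊆ Θ →
  ∀ (M₁ M₂ : Model) (t : M₁.U) (u : M₂.U)
    (A12 : List M₁.U → List M₂.U → Prop) (A21 : List M₂.U → List M₁.U → Prop),
    IsKAsimD1 boxOne Θ M₁ M₂ t u k A12 A21 →
    ∀ (a : M₁.U) (b : M₂.U), A12 [a] [b] → SatAt M₁ a x φ → SatAt M₂ b x φ

/-- φ(x) is invariant with respect to (i,2)-modal k-asimulations. -/
def KInvariantD2 (boxOne : Bool) (x : ℕ) (φ : FOForm) (k : ℕ) : Prop :=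
  ∀ Θ : Set ℕ, (φ.predLetters : Set ℕ) ⊆ Θ →
  ∀ (M₁ M₂ : Model) (t : M₁.U) (u : M₂.U)
    (A12 : List M₁.U → List M₂.U → Prop) (A21 : List M₂.U → List M₁.U → Prop)
    (B12 : List M₁.U → List M₂.U → Prop) (B21 : List M₂.U → List M₁.U → Prop),
    IsKAsimD2 boxOne Θ M₁ M₂ t u k A12 A21 B12 B21 →
    ∀ (a : M₁.U) (b : M₂.U), A12 [a] [b] → SatAt M₁ a x φ → SatAt M₂ b x φ

/-! ### Conditions for asimulations *simpliciter* (relations between elements). -/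

section ElemConds

variable (N P : Model)

/-- (base). -/
def BaseCondE (Θ : Set ℕ) (A : N.U → P.U → Prop) : Prop :=
  ∀ (a : N.U) (b : P.U), A a b → ∀ n ∈ Θ, N.pred n a → P.pred n b

/-- (step). -/
def StepCondE (A : N.U → P.U → Prop) (Arev : P.U → N.U → Prop) : Prop :=
  ∀ (a : N.U) (b d : P.U), A a b → P.rel b d →
    ∃ c : N.U, N.rel a c ∧ A c d ∧ Arev d c

/-- (box-1). -/
def Box1CondE (A : N.U → P.U → Prop) : Prop :=
  ∀ (a : N.U) (b d : P.U), A a b → P.relBox b d →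
    ∃ c : N.U, N.relBox a c ∧ A c d

/-- (box-2). -/
def Box2CondE (A : N.U → P.U → Prop) : Prop :=
  ∀ (a : N.U) (b d f : P.U), A a b → P.rel b d → P.relBox d f →
    ∃ c e : N.U, N.rel a c ∧ N.relBox c e ∧ A e f

/-- (diam-1). -/
def Diam1CondE (A : N.U → P.U → Prop) : Prop :=
  ∀ (a c : N.U) (b : P.U), A a b → N.relDiam a c →
    ∃ d : P.U, P.relDiam b d ∧ A c d

/-- (diam-2(1)). -/
def Diam2aCondE (A B : N.U → P.U → Prop) : Prop :=
  ∀ (a : N.U) (b d : P.U), A a b → P.rel b d →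
    ∃ c : N.U, N.rel a c ∧ B c d

/-- (diam-2(2)). -/
def Diam2bCondE (B A : N.U → P.U → Prop) : Prop :=
  ∀ (a c : N.U) (b : P.U), B a b → N.relDiam a c →
    ∃ d : P.U, P.relDiam b d ∧ A c d

end ElemConds

/-- An (i,1)-modal ⟨(M₁,t),(M₂,u)⟩-asimulation (j = 1). -/
def IsAsimD1 (boxOne : Bool) (Θ : Set ℕ) (M₁ M₂ : Model) (t : M₁.U) (u : M₂.U)
    (A12 : M₁.U → M₂.U → Prop) (A21 : M₂.U → M₁.U → Prop) : Prop :=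
  A12 t u ∧
  BaseCondE M₁ M₂ Θ A12 ∧ BaseCondE M₂ M₁ Θ A21 ∧
  StepCondE M₁ M₂ A12 A21 ∧ StepCondE M₂ M₁ A21 A12 ∧
  (if boxOne then Box1CondE M₁ M₂ A12 ∧ Box1CondE M₂ M₁ A21
   else Box2CondE M₁ M₂ A12 ∧ Box2CondE M₂ M₁ A21) ∧
  Diam1CondE M₁ M₂ A12 ∧ Diam1CondE M₂ M₁ A21

/-- An (i,2)-modal ⟨(M₁,t),(M₂,u)⟩-asimulation (j = 2). -/
def IsAsimD2 (boxOne : Bool) (Θ : Set ℕ) (M₁ M₂ : Model) (t : M₁.U) (u : M₂.U)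
    (A12 : M₁.U → M₂.U → Prop) (A21 : M₂.U → M₁.U → Prop)
    (B12 : M₁.U → M₂.U → Prop) (B21 : M₂.U → M₁.U → Prop) : Prop :=
  A12 t u ∧
  BaseCondE M₁ M₂ Θ A12 ∧ BaseCondE M₂ M₁ Θ A21 ∧
  StepCondE M₁ M₂ A12 A21 ∧ StepCondE M₂ M₁ A21 A12 ∧
  (if boxOne then Box1CondE M₁ M₂ A12 ∧ Box1CondE M₂ M₁ A21
   else Box2CondE M₁ M₂ A12 ∧ Box2CondE M₂ M₁ A21) ∧
  Diam2aCondE M₁ M₂ A12 B12 ∧ Diam2aCondE M₂ M₁ A21 B21 ∧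
  Diam2bCondE M₁ M₂ B12 A12 ∧ Diam2bCondE M₂ M₁ B21 A21

/-- φ(x) is invariant with respect to (i,1)-modal asimulations. -/
def InvariantD1 (boxOne : Bool) (x : ℕ) (φ : FOForm) : Prop :=
  ∀ Θ : Set ℕ, (φ.predLetters : Set ℕ) ⊆ Θ →
  ∀ (M₁ M₂ : Model) (t : M₁.U) (u : M₂.U)
    (A12 : M₁.U → M₂.U → Prop) (A21 : M₂.U → M₁.U → Prop),
    IsAsimD1 boxOne Θ M₁ M₂ t u A12 A21 →
    ∀ (a : M₁.U) (b : M₂.U), A12 a b → SatAt M₁ a x φ → SatAt M₂ b x φ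

/-- φ(x) is invariant with respect to (i,2)-modal asimulations. -/
def InvariantD2 (boxOne : Bool) (x : ℕ) (φ : FOForm) : Prop :=
  ∀ Θ : Set ℕ, (φ.predLetters : Set ℕ) ⊆ Θ →
  ∀ (M₁ M₂ : Model) (t : M₁.U) (u : M₂.U)
    (A12 : M₁.U → M₂.U → Prop) (A21 : M₂.U → M₁.U → Prop)
    (B12 : M₁.U → M₂.U → Prop) (B21 : M₂.U → M₁.U → Prop),
    IsAsimD2 boxOne Θ M₁ M₂ t u A12 A21 B12 B21 →
    ∀ (a : M₁.U) (b : M₂.U), A12 a b → SatAt M₁ a x φ → SatAt M₂ b x φ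

/-! ### Types, complete conjunctions, ω-saturation. -/

/-- `int(φ,x,l)`: the set of (2,2)-standard x-translations of modal
intuitionistic formulas which are (Σ_φ,x,l)-formulas. -/
def intSet (φ : FOForm) (x l : ℕ) : Set FOForm :=
  {ψ | (∃ I : MForm, ψ = ST false false I x) ∧
    ψ.predLetters ⊆ φ.predLetters ∧ ψ.freeVars ⊆ {x} ∧ ψ.degree ≤ l}

/-- `tp_l(φ(x),M,a)`. -/
def tpSet (φ : FOForm) (x l : ℕ) (M : Model) (a : M.U) : Set FOForm :=
  {ψ | ψ ∈ intSet φ x l ∧ SatAt M a x ψ}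

/-- Conjunction of a nonempty list of formulas. -/
def listConj : FOForm → List FOForm → FOForm
  | ψ, [] => ψ
  | ψ, χ :: L => FOForm.conj ψ (listConj χ L)

/-- Ψ(x) is a complete (φ,x,k)-conjunction. -/
def IsCompleteConj (φ : FOForm) (x k : ℕ) (Ψ : FOForm) : Prop :=
  (∃ (ψ₀ : FOForm) (L : List FOForm), ψ₀ ∈ intSet φ x k ∧
    (∀ χ ∈ L, χ ∈ intSet φ x k) ∧ Ψ = listConj ψ₀ L) ∧
  ∃ (M : Model) (a : M.U), SatAt M a x (FOForm.conj Ψ φ) ∧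
    ∀ ψ ∈ tpSet φ x k M a, Entails Ψ ψ

/-- `int_x(Θ)` for the (i,j)-standard translation. -/
def intX (Θ : Set ℕ) (boxOne diamOne : Bool) (x : ℕ) : Set FOForm :=
  {ψ | (∃ I : MForm, ψ = ST boxOne diamOne I x) ∧ (ψ.predLetters : Set ℕ) ⊆ Θ}

/-- `tp_x(M,t)` for the (i,j)-standard translation. -/
def tpX (Θ : Set ℕ) (boxOne diamOne : Bool) (x : ℕ) (M : Model) (t : M.U) : Set FOForm :=
  {ψ | ψ ∈ intX Θ boxOne diamOne x ∧ SatAt M t x ψ}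

/-- `imp_x(M,t) = ⋂ { t̄p_x(M,u) : t R_◇ u }` (for the (2,2)-translation). -/
def impX (Θ : Set ℕ) (x : ℕ) (M : Model) (t : M.U) : Set FOForm :=
  {ψ | ψ ∈ intX Θ false false x ∧ ∀ u : M.U, M.relDiam t u → ¬ SatAt M u x ψ}

/-- ω-saturation: for every finite tuple of parameters (the first `n` values of
an assignment `α`) and every set `Γ` of formulas with finitely many free
variables beyond the parameters, if `Γ` is consistent with the first-order
theory of `[M,ā]` (i.e. satisfiable together with it in some model), then `Γ`
is realized in `[M,ā]`. -/
def OmegaSaturated (M : Model) : Prop :=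
  ∀ (n : ℕ) (α : ℕ → M.U) (Γ : Set FOForm),
    (∃ k : ℕ, ∀ γ ∈ Γ, γ.freeVars ⊆ Finset.range (n + k)) →
    (∃ (N : Model) (β : ℕ → N.U),
      (∀ ψ : FOForm, ψ.freeVars ⊆ Finset.range n → Sat M ψ α → Sat N ψ β) ∧
      ∀ γ ∈ Γ, Sat N γ β) →
    ∃ α' : ℕ → M.U, (∀ i < n, α' i = α i) ∧ ∀ γ ∈ Γ, Sat M γ α'

/-! ### Relativization to a class κ of models. -/

/-- κ(Θ) is first-order axiomatizable for every finite Θ (with R ∈ Θ): for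
every finite set `S` of unary predicate letters there is a set of Θ-sentences
axiomatizing membership in κ. -/
def FinAxiomatizable (κ : Set Model) : Prop :=
  ∀ S : Finset ℕ, ∃ Ax : Set FOForm,
    (∀ ψ ∈ Ax, ψ.freeVars = ∅ ∧ (ψ.predLetters : Set ℕ) ⊆ (S : Set ℕ)) ∧
    ∀ M : Model, M ∈ κ ↔ ∀ ψ ∈ Ax, ∀ α : ℕ → M.U, Sat M ψ α

/-- φ κ-follows from ψ: {ψ, ¬φ} is not κ-satisfiable. -/
def KappaFollows (κ : Set Model) (ψ φ : FOForm) : Prop :=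
  ¬ ∃ M : Model, M ∈ κ ∧ ∃ α : ℕ → M.U, Sat M ψ α ∧ ¬ Sat M φ α

/-- κ-equivalence of formulas. -/
def KappaEquiv (κ : Set Model) (φ ψ : FOForm) : Prop :=
  KappaFollows κ φ ψ ∧ KappaFollows κ ψ φ

/-- φ(x) is κ-invariant with respect to (i,1)-modal asimulations. -/
def KappaInvariantD1 (κ : Set Model) (boxOne : Bool) (x : ℕ) (φ : FOForm) : Prop :=
  ∀ Θ : Set ℕ, (φ.predLetters : Set ℕ) ⊆ Θ →
  ∀ (M₁ M₂ : Model), M₁ ∈ κ → M₂ ∈ κ →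
  ∀ (t : M₁.U) (u : M₂.U)
    (A12 : M₁.U → M₂.U → Prop) (A21 : M₂.U → M₁.U → Prop),
    IsAsimD1 boxOne Θ M₁ M₂ t u A12 A21 →
    ∀ (a : M₁.U) (b : M₂.U), A12 a b → SatAt M₁ a x φ → SatAt M₂ b x φ

/-- φ(x) is κ-invariant with respect to (i,2)-modal asimulations. -/
def KappaInvariantD2 (κ : Set Model) (boxOne : Bool) (x : ℕ) (φ : FOForm) : Prop :=
  ∀ Θ : Set ℕ, (φ.predLetters : Set ℕ) ⊆ Θ →
  ∀ (M₁ M₂ : Model), M₁ ∈ κ → M₂ ∈ κ →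
  ∀ (t : M₁.U) (u : M₂.U)
    (A12 : M₁.U → M₂.U → Prop) (A21 : M₂.U → M₁.U → Prop)
    (B12 : M₁.U → M₂.U → Prop) (B21 : M₂.U → M₁.U → Prop),
    IsAsimD2 boxOne Θ M₁ M₂ t u A12 A21 B12 B21 →
    ∀ (a : M₁.U) (b : M₂.U), A12 a b → SatAt M₁ a x φ → SatAt M₂ b x φ

/-- φ(x) is κ-invariant with respect to (i,j)-modal asimulations
(`diamOne = true` means j = 1). -/
def KappaInvariant (κ : Set Model) (boxOne diamOne : Bool) (x : ℕ) (φ : FOForm) : Prop :=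
  if diamOne then KappaInvariantD1 κ boxOne x φ else KappaInvariantD2 κ boxOne x φ

/-! Since the language has no identity, the ultraproduct of models can be taken on the full product
of the domains. Over an ultrafilter that is not countably complete it realizes every countable type
that it finitely realizes, in particular all types built from the countably many modal formulas.
Between two such models, inclusion of the modal theories of points, paired with inclusion of the
sets of formulas forced at some `R_◇`-successor, is an asimulation. If `φ` is not equivalent to any
`ST_22(I, x)`, compactness yields first a saturated model in which `φ` fails at a point forcing
every modal consequence of `φ`, and then a saturated model in which `φ` holds at a point whose modal
theory is included in that of the former one; so `φ` is not invariant. -/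

/-- Truth of `ST_22(I, x)` in `M` at `a`, by recursion on the modal formula `I`. -/
def Forces (M : Model) : MForm → M.U → Prop
  | .bot, _ => False
  | .prop n, a => M.pred n a
  | .conj I J, a => Forces M I a ∧ Forces M J a
  | .disj I J, a => Forces M I a ∨ Forces M J a
  | .impl I J, a => ∀ b, M.rel a b → Forces M I b → Forces M J b
  | .box I, a => ∀ b, M.rel a b → ∀ c, M.relBox b c → Forces M I c
  | .diam I, a => ∀ b, M.rel a b → ∃ c, M.relDiam b c ∧ Forces M I c

/-- Truth of `◇I` at `a` under the clause (◇₁); the second component of the asimulation between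
saturated models compares points by these formulas. -/
def DiamForces (M : Model) (I : MForm) (a : M.U) : Prop :=
  ∃ b, M.relDiam a b ∧ Forces M I b

theorem sat_ST_iff_forces {M : Model} {I : MForm} {x : ℕ} {α : ℕ → M.U} :
    Sat M (ST false false I x) α ↔ Forces M I (α x) := by
  induction I generalizing x α with
  | bot | prop => rfl
  | conj I J hI hJ | disj I J hI hJ => simp [ST, Sat, Forces, hI, hJ]
  | impl I J hI hJ => simp [ST, Sat, Forces, hI, hJ, Model.relOf]
  | box I hI | diam I hI => simp [ST, Sat, Forces, hI, Model.relOf]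

namespace MForm

/-- An injective coding of modal formulas by natural numbers, witnessing that there are only
countably many of them. -/
def code : MForm → ℕ
  | .bot => Nat.pair 0 0
  | .prop n => Nat.pair 1 n
  | .conj I J => Nat.pair 2 (Nat.pair I.code J.code)
  | .disj I J => Nat.pair 3 (Nat.pair I.code J.code)
  | .impl I J => Nat.pair 4 (Nat.pair I.code J.code)
  | .box I => Nat.pair 5 I.code
  | .diam I => Nat.pair 6 I.code

theorem code_injective : Function.Injective code := by
  intro I
  induction I <;> rintro (_ | _) <;> grind [code, Nat.pair_eq_pair]

instance : Countable MForm :=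
  code_injective.countable

/-- The conjunction of a finite set of modal formulas; the empty conjunction is `⊥ → ⊥`. -/
noncomputable def bigConj (s : Finset MForm) : MForm :=
  s.toList.foldr .conj (.impl .bot .bot)

/-- The disjunction of a finite set of modal formulas; the empty disjunction is `⊥`. -/
noncomputable def bigDisj (s : Finset MForm) : MForm :=
  s.toList.foldr .disj .bot

end MForm

theorem forces_bigConj {M : Model} {s : Finset MForm} {a : M.U} :
    Forces M (.bigConj s) a ↔ ∀ I ∈ s, Forces M I a := by
  have forces_foldr (l : List MForm) :
      Forces M (l.foldr .conj (.impl .bot .bot)) a ↔ ∀ I ∈ l, Forces M I a := by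
    induction l with
    | nil => simp [Forces]
    | cons I l ih => simp [Forces, ih]
  simpa [MForm.bigConj] using forces_foldr s.toList

theorem forces_bigDisj {M : Model} {s : Finset MForm} {a : M.U} :
    Forces M (.bigDisj s) a ↔ ∃ I ∈ s, Forces M I a := by
  have forces_foldr (l : List MForm) :
      Forces M (l.foldr .disj .bot) a ↔ ∃ I ∈ l, Forces M I a := by
    induction l with
    | nil => simp [Forces]
    | cons I l ih => simp [Forces, ih]
  simpa [MForm.bigDisj] using forces_foldr s.toList

theorem eqOn_update_of_eqOn_diff {ι X : Type*} [DecidableEq ι] {α β : ι → X} {s : Set ι} {v : ι}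
    (h : Set.EqOn α β (s \ {v})) (u : X) :
    Set.EqOn (Function.update α v u) (Function.update β v u) s := by
  intro w hw
  rcases eq_or_ne w v with rfl | hne
  · simp
  · simp only [Function.update_of_ne hne]
    exact h ⟨hw, hne⟩

theorem sat_congr {M : Model} {φ : FOForm} {α β : ℕ → M.U} (h : Set.EqOn α β φ.freeVars) :
    Sat M φ α ↔ Sat M φ β := by
  induction φ generalizing α β with
  | falsum => rfl
  | pred n v => simp only [Sat, h (show v ∈ _ by simp [FOForm.freeVars])]
  | rel s v w =>
    simp only [Sat, h (show v ∈ _ by simp [FOForm.freeVars]),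
      h (show w ∈ _ by simp [FOForm.freeVars])]
  | conj f g hf hg | disj f g hf hg | impl f g hf hg =>
    simp only [FOForm.freeVars, Finset.coe_union, Set.eqOn_union] at h
    simp only [Sat, hf h.1, hg h.2]
  | all v f hf =>
    simp only [FOForm.freeVars, Finset.coe_sdiff, Finset.coe_singleton] at h
    exact forall_congr' fun u => hf (eqOn_update_of_eqOn_diff h u)
  | ex v f hf =>
    simp only [FOForm.freeVars, Finset.coe_sdiff, Finset.coe_singleton] at h
    exact exists_congr fun u => hf (eqOn_update_of_eqOn_diff h u)

theorem satAt_of_sat {M : Model} {φ : FOForm} {x : ℕ} (hfv : φ.freeVars ⊆ {x}) {α : ℕ → M.U}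
    (h : Sat M φ α) : SatAt M (α x) x φ := fun β hβ => by
  refine (sat_congr fun v hv => ?_).1 h
  rw [Finset.mem_singleton.1 (hfv hv), hβ]

/-- The reduct of `M` to the letters in `Θ`, encoded by making all other letters empty. -/
def Model.reduct (M : Model) (Θ : Set ℕ) : Model where
  U := M.U
  rel := M.rel
  relBox := M.relBox
  relDiam := M.relDiam
  pred n a := n ∈ Θ ∧ M.pred n a

theorem sat_reduct {M : Model} {Θ : Set ℕ} {φ : FOForm} (h : (φ.predLetters : Set ℕ) ⊆ Θ)
    {α : ℕ → M.U} : Sat (M.reduct Θ) φ α ↔ Sat M φ α := by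
  induction φ generalizing α with
  | falsum => rfl
  | pred n v => exact and_iff_right (h (by simp [FOForm.predLetters]))
  | rel s v w => cases s <;> rfl
  | conj f g hf hg | disj f g hf hg | impl f g hf hg =>
    simp only [FOForm.predLetters, Finset.coe_union, Set.union_subset_iff] at h
    simp only [Sat, hf h.1, hg h.2]
  | all v f hf => exact forall_congr' fun u => hf h
  | ex v f hf => exact exists_congr fun u => hf h

theorem IsAsimD2.reduct {boxOne : Bool} {Θ : Set ℕ} {M N : Model} {t : M.U} {u : N.U}
    {A : M.U → N.U → Prop} {A' : N.U → M.U → Prop} {B : M.U → N.U → Prop} {B' : N.U → M.U → Prop}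
    (h : IsAsimD2 boxOne Θ M N t u A A' B B') :
    IsAsimD2 boxOne Set.univ (M.reduct Θ) (N.reduct Θ) t u A A' B B' := by
  obtain ⟨htu, hbase, hbase', hrest⟩ := h
  exact ⟨htu, fun a b hab n _ hn => ⟨hn.1, hbase a b hab n hn.1 hn.2⟩,
    fun a b hab n _ hn => ⟨hn.1, hbase' a b hab n hn.1 hn.2⟩, hrest⟩

/-- The truth of `I` is transferred along the relation `A`. -/
def Preserves {M N : Model} (A : M.U → N.U → Prop) (I : MForm) : Prop :=
  ∀ a b, A a b → Forces M I a → Forces N I b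

namespace Preserves

variable {M N : Model} {A B : M.U → N.U → Prop} {A' : N.U → M.U → Prop} {I J : MForm}

theorem conj (hI : Preserves A I) (hJ : Preserves A J) : Preserves A (.conj I J) :=
  fun a b hab h => h.imp (hI a b hab) (hJ a b hab)

theorem disj (hI : Preserves A I) (hJ : Preserves A J) : Preserves A (.disj I J) :=
  fun a b hab h => h.imp (hI a b hab) (hJ a b hab)

theorem impl (hstep : StepCondE M N A A') (hI : Preserves A' I) (hJ : Preserves A J) :
    Preserves A (.impl I J) := by
  intro a b hab h d hbd hd
  obtain ⟨c, hac, hcd, hdc⟩ := hstep a b d hab hbd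
  exact hJ c d hcd (h c hac (hI d c hdc hd))

theorem box (hbox : Box2CondE M N A) (hI : Preserves A I) : Preserves A (.box I) := by
  intro a b hab h d hbd f hdf
  obtain ⟨c, e, hac, hce, hef⟩ := hbox a b d f hab hbd hdf
  exact hI e f hef (h c hac e hce)

theorem diam (hAB : Diam2aCondE M N A B) (hBA : Diam2bCondE M N B A) (hI : Preserves A I) :
    Preserves A (.diam I) := by
  intro a b hab h d hbd
  obtain ⟨c, hac, hcd⟩ := hAB a b d hab hbd
  obtain ⟨e, hce, he⟩ := h c hac
  obtain ⟨f, hdf, hef⟩ := hBA c e d hcd hce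
  exact ⟨f, hdf, hI e f hef he⟩

end Preserves

theorem IsAsimD2.preserves {M N : Model} {t : M.U} {u : N.U} {A : M.U → N.U → Prop}
    {A' : N.U → M.U → Prop} {B : M.U → N.U → Prop} {B' : N.U → M.U → Prop}
    (h : IsAsimD2 false Set.univ M N t u A A' B B') (I : MForm) :
    Preserves A I ∧ Preserves A' I := by
  obtain ⟨-, hbase, hbase', hstep, hstep', hbox, hAB, hAB', hBA, hBA'⟩ := h
  obtain ⟨hbox, hbox'⟩ : Box2CondE M N A ∧ Box2CondE N M A' := hbox
  induction I with
  | bot => exact ⟨fun _ _ _ => id, fun _ _ _ => id⟩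
  | prop n =>
    exact ⟨fun a b hab => hbase a b hab n trivial, fun a b hab => hbase' a b hab n trivial⟩
  | conj I J hI hJ => exact ⟨hI.1.conj hJ.1, hI.2.conj hJ.2⟩
  | disj I J hI hJ => exact ⟨hI.1.disj hJ.1, hI.2.disj hJ.2⟩
  | impl I J hI hJ => exact ⟨.impl hstep hI.2 hJ.1, .impl hstep' hI.1 hJ.2⟩
  | box I hI => exact ⟨.box hbox hI.1, .box hbox' hI.2⟩
  | diam I hI => exact ⟨.diam hAB hBA hI.1, .diam hAB' hBA' hI.2⟩

theorem invariantD2_of_equiv_ST {x : ℕ} {φ : FOForm} {I : MForm}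
    (hI : Equiv φ (ST false false I x)) : InvariantD2 false x φ := by
  intro Θ hΘ M N t u A A' B B' hasim a b hab ha β hβ
  have forces_iff (M : Model) (α : ℕ → M.U) : Sat M φ α ↔ Forces (M.reduct Θ) I (α x) :=
    (sat_reduct hΘ).symm.trans ((hI (M.reduct Θ) α).trans sat_ST_iff_forces)
  have hIa : Forces (M.reduct Θ) I a := (forces_iff M fun _ => a).1 (ha _ rfl)
  have hIb : Forces (N.reduct Θ) I b := (hasim.reduct.preserves I).1 a b hab hIa
  rwa [forces_iff, hβ]

section Types

variable {U κ : Type*}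

/-- `u` realizes the type that asserts the predicates `P k` for `k ∈ Γ` and denies those
for `k ∈ Δ`. -/
def Realizes (P : κ → U → Prop) (Γ Δ : Set κ) (u : U) : Prop :=
  (∀ k ∈ Γ, P k u) ∧ ∀ k ∈ Δ, ¬ P k u

/-- Saturation of `S` with respect to the predicates `P k`: a type all of whose finite subtypes are
realized in `S` is realized in `S`. -/
def SaturatedOn (S : Set U) (P : κ → U → Prop) : Prop :=
  ∀ Γ Δ : Set κ, (∀ Γ₀ Δ₀ : Finset κ, ↑Γ₀ ⊆ Γ → ↑Δ₀ ⊆ Δ → ∃ u ∈ S, Realizes P Γ₀ Δ₀ u) →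
    ∃ u ∈ S, Realizes P Γ Δ u

/-- Every `P`-property of `a` is a `Q`-property of `b`. -/
def TypeLE {V : Type*} (P : κ → U → Prop) (Q : κ → V → Prop) (a : U) (b : V) : Prop :=
  ∀ k, P k a → Q k b

end Types

/-- Saturation of `M` for the modal types of the points reached from a given point, in the four
forms needed to verify the clauses (step), (box-2), (diam-2(1)) and (diam-2(2)). -/
structure ModallySaturated (M : Model) : Prop where
  rel (a : M.U) : SaturatedOn {c | M.rel a c} (Forces M)
  relComp (a : M.U) : SaturatedOn {e | Relation.Comp M.rel M.relBox a e} (Forces M)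
  diam (a : M.U) : SaturatedOn {c | M.rel a c} (DiamForces M)
  relDiam (a : M.U) : SaturatedOn {c | M.relDiam a c} (Forces M)

namespace ModallySaturated

variable {M : Model}

theorem stepCondE (hM : ModallySaturated M) (N : Model) :
    StepCondE M N (TypeLE (Forces M) (Forces N)) (TypeLE (Forces N) (Forces M)) := by
  intro a b d hab hbd
  obtain ⟨c, hac, htrue, hfalse⟩ :=
      hM.rel a {I | Forces N I d} {I | ¬ Forces N I d} fun Γ Δ hΓ hΔ => by
    by_contra! hno
    have himpl : Forces M (.impl (.bigConj Γ) (.bigDisj Δ)) a := fun c hac hc => by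
      by_contra hc'
      exact hno c hac ⟨forces_bigConj.1 hc, fun I hI hIc => hc' (forces_bigDisj.2 ⟨I, hI, hIc⟩)⟩
    obtain ⟨I, hI, hId⟩ := forces_bigDisj.1 (hab _ himpl d hbd (forces_bigConj.2 hΓ))
    exact hΔ hI hId
  exact ⟨c, hac, fun I hIc => not_not.1 fun hId => hfalse I hId hIc, htrue⟩

theorem box2CondE (hM : ModallySaturated M) (N : Model) :
    Box2CondE M N (TypeLE (Forces M) (Forces N)) := by
  intro a b d f hab hbd hdf
  obtain ⟨e, ⟨c, hac, hce⟩, -, hfalse⟩ :=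
      hM.relComp a ∅ {I | ¬ Forces N I f} fun Γ Δ hΓ hΔ => by
    by_contra! hno
    have hbox : Forces M (.box (.bigDisj Δ)) a := fun c hac e hce => by
      by_contra he
      exact hno e ⟨c, hac, hce⟩
        ⟨fun I hI => (hΓ hI).elim, fun I hI hIe => he (forces_bigDisj.2 ⟨I, hI, hIe⟩)⟩
    obtain ⟨I, hI, hIf⟩ := forces_bigDisj.1 (hab _ hbox d hbd f hdf)
    exact hΔ hI hIf
  exact ⟨c, e, hac, hce, fun I hIe => not_not.1 fun hIf => hfalse I hIf hIe⟩

theorem diam2aCondE (hM : ModallySaturated M) (N : Model) :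
    Diam2aCondE M N (TypeLE (Forces M) (Forces N)) (TypeLE (DiamForces M) (DiamForces N)) := by
  intro a b d hab hbd
  obtain ⟨c, hac, -, hfalse⟩ :=
      hM.diam a ∅ {I | ¬ DiamForces N I d} fun Γ Δ hΓ hΔ => by
    by_contra! hno
    have hdiam : Forces M (.diam (.bigDisj Δ)) a := fun c hac => by
      by_contra hc
      exact hno c hac ⟨fun I hI => (hΓ hI).elim,
        fun I hI ⟨e, hce, hIe⟩ => hc ⟨e, hce, forces_bigDisj.2 ⟨I, hI, hIe⟩⟩⟩
    obtain ⟨f, hdf, hf⟩ := hab _ hdiam d hbd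
    obtain ⟨I, hI, hIf⟩ := forces_bigDisj.1 hf
    exact hΔ hI ⟨f, hdf, hIf⟩
  exact ⟨c, hac, fun I hIc => not_not.1 fun hId => hfalse I hId hIc⟩

theorem diam2bCondE (M : Model) {N : Model} (hN : ModallySaturated N) :
    Diam2bCondE M N (TypeLE (DiamForces M) (DiamForces N)) (TypeLE (Forces M) (Forces N)) := by
  intro a c b hab hac
  obtain ⟨d, hbd, htrue, -⟩ := hN.relDiam b {I | Forces M I c} ∅ fun Γ Δ hΓ hΔ => by
    obtain ⟨d, hbd, hd⟩ := hab (.bigConj Γ) ⟨c, hac, forces_bigConj.2 hΓ⟩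
    exact ⟨d, hbd, forces_bigConj.1 hd, fun I hI => (hΔ hI).elim⟩
  exact ⟨d, hbd, htrue⟩

theorem isAsimD2_typeLE {N : Model} (hM : ModallySaturated M) (hN : ModallySaturated N)
    {a : M.U} {b : N.U} (hab : TypeLE (Forces M) (Forces N) a b) :
    IsAsimD2 false Set.univ M N a b (TypeLE (Forces M) (Forces N)) (TypeLE (Forces N) (Forces M))
      (TypeLE (DiamForces M) (DiamForces N)) (TypeLE (DiamForces N) (DiamForces M)) :=
  ⟨hab, fun _ _ h n _ => h (.prop n), fun _ _ h n _ => h (.prop n),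
    hM.stepCondE N, hN.stepCondE M, ⟨hM.box2CondE N, hN.box2CondE M⟩,
    hM.diam2aCondE N, hN.diam2aCondE M, hN.diam2bCondE M, hM.diam2bCondE N⟩

end ModallySaturated

section Internal

open Filter

variable {ι : Type*} {X : ι → Type*} {l : Filter ι}

/-- A set of functions is internal modulo `l` if it is represented by a family of sets, as a subset
of a reduced product. -/
def IsInternal (l : Filter ι) (A : Set (∀ i, X i)) : Prop :=
  ∃ B : ∀ i, Set (X i), ∀ f, f ∈ A ↔ ∀ᶠ i in l, f i ∈ B i

theorem isInternal_setOf_eventually (p : ∀ i, X i → Prop) :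
    IsInternal l {f | ∀ᶠ i in l, p i (f i)} :=
  ⟨fun i => {x | p i x}, fun _ => Iff.rfl⟩

theorem IsInternal.preimage {Y : ι → Type*} [∀ i, Nonempty (Y i)] {B : Set (∀ i, Y i)}
    (hB : IsInternal l B) (r : ∀ i, X i → Y i → Prop) :
    IsInternal l {f : ∀ i, X i | ∃ g, (∀ᶠ i in l, r i (f i) (g i)) ∧ g ∈ B} := by
  obtain ⟨C, hC⟩ := hB
  refine ⟨fun i => {x | ∃ y, r i x y ∧ y ∈ C i}, fun f => ?_⟩
  simp only [Set.mem_ofPred_eq, hC, ← eventually_and]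
  exact (skolem (P := fun i y => r i (f i) y ∧ y ∈ C i)).symm

/- The value of `c` at `i` satisfies the strongest satisfiable condition among the first `r i`. -/
theorem exists_forall_eventually_of_antitone {r : ι → ℕ} (hr : Tendsto r l atTop)
    {p : ℕ → ∀ i, X i → Prop} (hp : ∀ i u, Antitone fun n => p n i u)
    (h : ∀ n, ∃ c : ∀ i, X i, ∀ᶠ i in l, p n i (c i)) :
    ∃ c : ∀ i, X i, ∀ n, ∀ᶠ i in l, p n i (c i) := by
  classical
  obtain ⟨c₀, -⟩ := h 0
  have (i : ι) : Nonempty (X i) := ⟨c₀ i⟩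
  let best (i : ι) : ℕ := Nat.findGreatest (fun n => ∃ u, p n i u) (r i)
  refine ⟨fun i => Classical.epsilon (p (best i) i), fun n => ?_⟩
  obtain ⟨d, hd⟩ := h n
  filter_upwards [hd, hr.eventually_ge_atTop n] with i hdi hri
  have hbest : ∃ u, p (best i) i u :=
    Nat.findGreatest_spec (P := fun n => ∃ u, p n i u) hri ⟨d i, hdi⟩
  exact hp i _ (Nat.le_findGreatest hri ⟨d i, hdi⟩) (Classical.epsilon_spec hbest)

/- A function `r` tending to infinity along `𝒰` exists exactly when `𝒰` is not countably
complete. -/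
theorem IsInternal.saturatedOn {𝒰 : Ultrafilter ι} {r : ι → ℕ} (hr : Tendsto r 𝒰 atTop)
    {κ : Type*} [Countable κ] {S : Set (∀ i, X i)} (hS : IsInternal 𝒰 S)
    {P : κ → (∀ i, X i) → Prop} (hP : ∀ k, IsInternal 𝒰 {f | P k f}) : SaturatedOn S P := by
  classical
  intro Γ Δ hfin
  obtain ⟨T, hT⟩ := hS
  choose Q hQ using hP
  obtain ⟨code, hcode⟩ := exists_injective_nat κ
  have exists_initial (n : ℕ) : ∃ c : ∀ i, X i, ∀ᶠ i in 𝒰, c i ∈ T i ∧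
      ∀ k, code k < n → (k ∈ Γ → c i ∈ Q k i) ∧ (k ∈ Δ → c i ∉ Q k i) := by
    have hn : {k | code k < n}.Finite := (Set.finite_lt_nat n).preimage hcode.injOn
    obtain ⟨c, hcS, hΓ, hΔ⟩ := hfin (hn.toFinset.filter (· ∈ Γ)) (hn.toFinset.filter (· ∈ Δ))
      (fun k hk => (Finset.mem_filter.1 hk).2) (fun k hk => (Finset.mem_filter.1 hk).2)
    refine ⟨c, ((hT c).1 hcS).and (hn.eventually_all.2 fun k hk => .and ?_ ?_)⟩
    · exact eventually_imp_distrib_left.2 fun hkΓ => (hQ k c).1 (hΓ k (by simp_all))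
    · exact eventually_imp_distrib_left.2 fun hkΔ =>
        Ultrafilter.eventually_not.2 fun hc => hΔ k (by simp_all) ((hQ k c).2 hc)
  obtain ⟨c, hc⟩ := exists_forall_eventually_of_antitone hr
    (p := fun n i u => u ∈ T i ∧
      ∀ k, code k < n → (k ∈ Γ → u ∈ Q k i) ∧ (k ∈ Δ → u ∉ Q k i))
    (fun i u m n hmn hu => ⟨hu.1, fun k hk => hu.2 k (hk.trans_le hmn)⟩) exists_initial
  have hcode_lt (k : κ) := (hc (code k + 1)).mono fun i hi => hi.2 k (Nat.lt_succ_self _)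
  refine ⟨c, (hT c).2 ((hc 0).mono fun i hi => hi.1), fun k hkΓ => ?_, fun k hkΔ hk => ?_⟩
  · exact (hQ k c).2 ((hcode_lt k).mono fun i hi => hi.1 hkΓ)
  · exact Ultrafilter.eventually_not.1 ((hcode_lt k).mono fun i hi => hi.2 hkΔ) ((hQ k c).1 hk)

end Internal

section Ultraproduct

open Filter

/-- The ultraproduct of the models `M i` modulo `𝒰`. Its points are choice functions, which need not
be identified modulo `𝒰` because the language has no identity. -/
def Model.ultraproduct {ι : Type} (𝒰 : Ultrafilter ι) (M : ι → Model) : Model where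
  U := ∀ i, (M i).U
  rel a b := ∀ᶠ i in 𝒰, (M i).rel (a i) (b i)
  relBox a b := ∀ᶠ i in 𝒰, (M i).relBox (a i) (b i)
  relDiam a b := ∀ᶠ i in 𝒰, (M i).relDiam (a i) (b i)
  pred n a := ∀ᶠ i in 𝒰, (M i).pred n (a i)

variable {ι : Type} {𝒰 : Ultrafilter ι} {M : ι → Model}

theorem sat_ultraproduct {φ : FOForm} {α : ℕ → (Model.ultraproduct 𝒰 M).U} :
    Sat (.ultraproduct 𝒰 M) φ α ↔ ∀ᶠ i in 𝒰, Sat (M i) φ (fun v => α v i) := by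
  have (i : ι) : Nonempty (M i).U := ⟨α 0 i⟩
  have eval_update (α : ℕ → (Model.ultraproduct 𝒰 M).U) (v : ℕ) (u : (Model.ultraproduct 𝒰 M).U)
      (i : ι) : (fun w => Function.update α v u w i) = Function.update (fun w => α w i) v (u i) :=
    funext fun w => Function.apply_update (fun _ a => a i) α v u w
  induction φ generalizing α with
  | falsum => exact eventually_false_iff_eq_bot.trans (iff_false_intro 𝒰.neBot.ne) |>.symm
  | pred n v => rfl
  | rel s v w => cases s <;> rfl
  | conj f g hf hg => exact (and_congr hf hg).trans eventually_and.symm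
  | disj f g hf hg => exact (or_congr hf hg).trans Ultrafilter.eventually_or.symm
  | impl f g hf hg => exact (imp_congr hf hg).trans Ultrafilter.eventually_imp.symm
  | all v f hf =>
    rw [← not_iff_not, ← Ultrafilter.eventually_not]
    simp only [Sat, not_forall, hf, ← Ultrafilter.eventually_not, eval_update]
    exact (skolem (P := fun i u => ¬ Sat (M i) f (Function.update (fun w => α w i) v u))).symm
  | ex v f hf =>
    simp only [Sat, hf, eval_update]
    exact (skolem (P := fun i u => Sat (M i) f (Function.update (fun w => α w i) v u))).symm

theorem forces_ultraproduct {I : MForm} {a : (Model.ultraproduct 𝒰 M).U} :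
    Forces (.ultraproduct 𝒰 M) I a ↔ ∀ᶠ i in 𝒰, Forces (M i) I (a i) := by
  simpa only [sat_ST_iff_forces] using
    sat_ultraproduct (φ := ST false false I 0) (α := fun _ => a)

theorem modallySaturated_ultraproduct {r : ι → ℕ} (hr : Tendsto r 𝒰 atTop) :
    ModallySaturated (.ultraproduct 𝒰 M) := by
  have forces_internal (I : MForm) : IsInternal 𝒰 {a | Forces (.ultraproduct 𝒰 M) I a} :=
    ⟨fun i => {u | Forces (M i) I u}, fun _ => forces_ultraproduct⟩
  have rel_internal (a : (Model.ultraproduct 𝒰 M).U) :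
      IsInternal 𝒰 {c | (Model.ultraproduct 𝒰 M).rel a c} :=
    isInternal_setOf_eventually fun i => (M i).rel (a i)
  refine ⟨fun a => ?_, fun a => ?_, fun a => ?_, fun a => ?_⟩ <;>
    have (i : ι) : Nonempty (M i).U := ⟨a i⟩
  · exact (rel_internal a).saturatedOn hr forces_internal
  · obtain ⟨B, hB⟩ := (rel_internal a).preimage fun i e c => (M i).relBox c e
    have comp_internal : IsInternal 𝒰 {e | Relation.Comp (Model.ultraproduct 𝒰 M).rel
        (Model.ultraproduct 𝒰 M).relBox a e} :=
      ⟨B, fun e => (exists_congr fun _ => and_comm).trans (hB e)⟩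
    exact comp_internal.saturatedOn hr forces_internal
  · exact (rel_internal a).saturatedOn hr fun I =>
      (forces_internal I).preimage fun i => (M i).relDiam
  · exact (isInternal_setOf_eventually fun i => (M i).relDiam (a i)).saturatedOn hr forces_internal

theorem exists_modallySaturated_of_finset {φ : FOForm} {x : ℕ} {Γ Δ : Set MForm}
    (h : ∀ Γ₀ Δ₀ : Finset MForm, ↑Γ₀ ⊆ Γ → ↑Δ₀ ⊆ Δ →
      ∃ (M : Model) (α : ℕ → M.U), Sat M φ α ∧ Realizes (Forces M) Γ₀ Δ₀ (α x)) :
    ∃ (M : Model) (α : ℕ → M.U),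
      ModallySaturated M ∧ Sat M φ α ∧ Realizes (Forces M) Γ Δ (α x) := by
  let 𝒰 : Ultrafilter ℕ := hyperfilter ℕ
  have htendsto : Tendsto id (𝒰 : Filter ℕ) atTop := Nat.hyperfilter_le_atTop
  let Interp := Σ M : Model, ℕ → M.U
  have hsat : SaturatedOn {f : ℕ → Interp | ∀ᶠ i in 𝒰, Sat (f i).1 φ (f i).2}
      (fun I f => ∀ᶠ i in 𝒰, Forces (f i).1 I ((f i).2 x)) :=
    (isInternal_setOf_eventually fun _ (m : Interp) => Sat m.1 φ m.2).saturatedOn htendsto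
      fun I => isInternal_setOf_eventually fun _ (m : Interp) => Forces m.1 I (m.2 x)
  obtain ⟨f, hφ, hΓ, hΔ⟩ := hsat Γ Δ fun Γ₀ Δ₀ hΓ₀ hΔ₀ => by
    obtain ⟨M, α, hφ, hΓ, hΔ⟩ := h Γ₀ Δ₀ hΓ₀ hΔ₀
    exact ⟨fun _ => ⟨M, α⟩, .of_forall fun _ => hφ, fun I hI => .of_forall fun _ => hΓ I hI,
      fun I hI hI' => hΔ I hI (eventually_const.1 hI')⟩
  exact ⟨.ultraproduct 𝒰 fun i => (f i).1, fun v i => (f i).2 v,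
    modallySaturated_ultraproduct htendsto, sat_ultraproduct.2 hφ,
    fun I hI => forces_ultraproduct.2 (hΓ I hI),
    fun I hI hI' => hΔ I hI (forces_ultraproduct.1 hI')⟩

end Ultraproduct

/-- The modal consequences of `φ`, evaluated at the value of the variable `x`. -/
def modalConsequences (φ : FOForm) (x : ℕ) : Set MForm :=
  {I | ∀ (M : Model) (α : ℕ → M.U), Sat M φ α → Forces M I (α x)}

theorem exists_modallySaturated_not_sat {φ : FOForm} {x : ℕ}
    (hφ : ¬ ∃ I : MForm, Equiv φ (ST false false I x)) :
    ∃ (N : Model) (β : ℕ → N.U), ModallySaturated N ∧ ¬ Sat N φ β ∧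
      ∀ I ∈ modalConsequences φ x, Forces N I (β x) := by
  obtain ⟨N, β, hN, hβ, hcons, -⟩ := exists_modallySaturated_of_finset (φ := φ.impl .falsum)
      (x := x) (Γ := modalConsequences φ x) (Δ := ∅) fun Γ Δ hΓ hΔ => by
    by_contra! hno
    refine hφ ⟨.bigConj Γ, fun M α => .trans ⟨fun hα => ?_, fun hα => ?_⟩ sat_ST_iff_forces.symm⟩
    · exact forces_bigConj.2 fun I hI => hΓ hI M α hα
    · by_contra hα'
      exact hno M α hα' ⟨forces_bigConj.1 hα, fun I hI => (hΔ hI).elim⟩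
  exact ⟨N, β, hN, hβ, hcons⟩

theorem exists_modallySaturated_typeLE {φ : FOForm} {x : ℕ} {N : Model} {b : N.U}
    (hb : ∀ I ∈ modalConsequences φ x, Forces N I b) :
    ∃ (M : Model) (α : ℕ → M.U), ModallySaturated M ∧ Sat M φ α ∧
      TypeLE (Forces M) (Forces N) (α x) b := by
  obtain ⟨M, α, hM, hα, -, hfalse⟩ := exists_modallySaturated_of_finset (φ := φ)
      (x := x) (Γ := ∅) (Δ := {I | ¬ Forces N I b}) fun Γ Δ hΓ hΔ => by
    by_contra! hno
    have hdisj : .bigDisj Δ ∈ modalConsequences φ x := fun M α hα => by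
      by_contra hα'
      exact hno M α hα
        ⟨fun I hI => (hΓ hI).elim, fun I hI hIα => hα' (forces_bigDisj.2 ⟨I, hI, hIα⟩)⟩
    obtain ⟨I, hI, hIb⟩ := forces_bigDisj.1 (hb _ hdisj)
    exact hΔ hI hIb
  exact ⟨M, α, hM, hα, fun I hIα => not_not.1 fun hIb => hfalse I hIb hIα⟩

theorem exists_equiv_ST_of_invariantD2 {φ : FOForm} {x : ℕ} (hfv : φ.freeVars ⊆ {x})
    (hinv : InvariantD2 false x φ) : ∃ I : MForm, Equiv φ (ST false false I x) := by
  by_contra hφ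
  obtain ⟨N, β, hN, hβ, hcons⟩ := exists_modallySaturated_not_sat hφ
  obtain ⟨M, α, hM, hα, hle⟩ := exists_modallySaturated_typeLE hcons
  have hsat : SatAt N (β x) x φ := hinv _ (Set.subset_univ _) M N _ _ _ _ _ _
    (hM.isAsimD2_typeLE hN hle) _ _ hle (satAt_of_sat hfv hα)
  exact hβ (hsat β rfl)

/-- **Theorem 2, case (i,j) = (2,2).**  φ(x) is logically equivalent to the
(2,2)-standard x-translation of a modal intuitionistic formula iff φ(x) is
invariant with respect to (2,2)-modal asimulations. -/
theorem statement_4 (x : ℕ) (φ : FOForm) (hfv : φ.freeVars ⊆ {x}) :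
    (∃ I : MForm, Equiv φ (ST false false I x)) ↔ InvariantD2 false x φ :=
  ⟨fun ⟨_, hI⟩ => invariantD2_of_equiv_ST hI, exists_equiv_ST_of_invariantD2 hfv⟩

end ModalIntAsim
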